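/- For real $\mu\ge 0$ and $z>0$ let $J_\mu(z)=\sum_{m=0}^\infty \frac{(-1)^m}{m!\,\Gamma(\mu+m+1)}\left(\frac z2\right)^{\mu+2m}$ be the Bessel function of the first kind of order $\mu$. Let $\nu\ge 1$ be a real number. Let $j_{\nu-1,1}<j_{\nu-1,2}<\cdots$ be the increasing enumeration of all positive zeroes of $J_{\nu-1}$, let $j'_{\nu-1,1}<j'_{\nu-1,2}<\cdots$ be that of all positive zeroes of the derivative $J'_{\nu-1}$, with the standard convention that for order $\nu-1=0$ the point $z=0$ is counted as the first zero of $J_0'$ (so $j'_{0,1}=0$, and $j'_{0,2}$ is the smallest positive zero of $J_0'$), and let $\lambda^-_{\nu-1,1}<\lambda^-_{\nu-1,2}<\cdots$ be that of all positive zeroes of $z\mapsto J_{\nu-1}(z)-J_\nu(z)$. Then for every integer $k\ge 1$ $$j_{\nu-1,k}<j'_{\nu-1,k+1}<\lambda^-_{\nu-1,k+1}<j_{\nu-1,k+1}.$$ -/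

import Mathlib

/-- Bessel function of the first kind of real order `ν`, defined by its power series
`J_ν(z) = ∑ₘ (−1)^m / (m! Γ(ν+m+1)) (z/2)^(ν+2m)` (with real-exponent powers). -/
noncomputable def besselJ (ν z : ℝ) : ℝ :=
  ∑' m : ℕ, ((-1 : ℝ) ^ m / (Nat.factorial m * Real.Gamma (ν + m + 1))) *
    (z / 2) ^ (ν + 2 * (m : ℝ))

/-- `x 1 < x 2 < x 3 < ...` lists exactly the elements of `S`; the value `x 0` is not used. -/
def Enumerates (S : Set ℝ) (x : ℕ → ℝ) : Prop :=
  StrictMonoOn x (Set.Ici 1) ∧ (∀ k, 1 ≤ k → x k ∈ S) ∧ ∀ z ∈ S, ∃ k, 1 ≤ k ∧ x k = z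

/-- The positive zeroes of `f`. -/
def posZeros (f : ℝ → ℝ) : Set ℝ := {z | 0 < z ∧ f z = 0}

/-- The zeroes of `J_μ′` that are listed as `j′_{μ,1} < j′_{μ,2} < ...`: the positive ones,
and for order `μ = 0` also `z = 0`, which by the standard convention is counted as the first
zero of `J_0′ = −J_1`, so that `j′_{0,1} = 0`. -/
def besselDerivZeros (μ : ℝ) : Set ℝ :=
  posZeros (deriv (besselJ μ)) ∪ {z | μ = 0 ∧ z = 0}

open Filter Topology Set

/-- Coefficients of the entire function `φ_μ` with `J_μ(z) = (z/2)^μ φ_μ(z²/4)`. -/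
noncomputable def besselCoeff (μ : ℝ) (m : ℕ) : ℝ :=
  (-1 : ℝ) ^ m / (Nat.factorial m * Real.Gamma (μ + m + 1))

/-- The entire function `φ_μ` with `J_μ(z) = (z/2)^μ φ_μ(z²/4)`. -/
noncomputable def besselPhi (μ x : ℝ) : ℝ := ∑' m : ℕ, besselCoeff μ m * x ^ m

lemma Gamma_le_Gamma_add_nat {μ : ℝ} (hμ : 0 ≤ μ) (m : ℕ) :
    Real.Gamma (μ + 1) ≤ Real.Gamma (μ + m + 1) := by
  induction m with
  | zero => simp
  | succ n ih =>
    have hp : 0 < Real.Gamma (μ + n + 1) := Real.Gamma_pos_of_pos (by positivity)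
    have h : Real.Gamma (μ + (n + 1 : ℕ) + 1) = (μ + n + 1) * Real.Gamma (μ + n + 1) := by
      rw [← Real.Gamma_add_one (by positivity)]; push_cast; ring_nf
    rw [h]
    have : (0 : ℝ) ≤ n := by positivity
    nlinarith

lemma abs_besselCoeff_le {μ : ℝ} (hμ : 0 ≤ μ) (m : ℕ) :
    |besselCoeff μ m| ≤ (Real.Gamma (μ + 1))⁻¹ * (1 / (m.factorial : ℝ)) := by
  have h1 : 0 < Real.Gamma (μ + 1) := Real.Gamma_pos_of_pos (by positivity)
  have h2 := Gamma_le_Gamma_add_nat hμ m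
  have h3 : (0 : ℝ) < m.factorial := by positivity
  rw [besselCoeff, abs_div, abs_pow, abs_neg, abs_one, one_pow,
    abs_of_pos (mul_pos h3 (h1.trans_le h2)), ← one_div, div_mul_div_comm, one_mul, mul_comm]
  gcongr

lemma summable_besselPhi {μ : ℝ} (hμ : 0 ≤ μ) (x : ℝ) :
    Summable fun m : ℕ => besselCoeff μ m * x ^ m := by
  refine Summable.of_norm_bounded
    ((Real.summable_pow_div_factorial |x|).mul_left (Real.Gamma (μ + 1))⁻¹) fun m => ?_
  rw [Real.norm_eq_abs, abs_mul, abs_pow]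
  calc _ ≤ ((Real.Gamma (μ + 1))⁻¹ * (1 / (m.factorial : ℝ))) * |x| ^ m := by
        gcongr; exact abs_besselCoeff_le hμ m
    _ = _ := by ring

lemma besselCoeff_succ_mul (μ : ℝ) (m : ℕ) :
    besselCoeff μ (m + 1) * (m + 1 : ℝ) = -besselCoeff (μ + 1) m := by
  have h : (m.factorial : ℝ) ≠ 0 := by positivity
  have h' : (m + 1 : ℝ) ≠ 0 := by positivity
  have e : μ + (m + 1 : ℕ) + 1 = μ + 1 + m + 1 := by push_cast; ring
  rw [besselCoeff, besselCoeff, e, Nat.factorial_succ, pow_succ]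
  push_cast
  rw [div_mul_eq_mul_div, mul_assoc (m + 1 : ℝ), mul_comm (m + 1 : ℝ) (_ * _),
    mul_div_mul_right _ _ h']
  ring

lemma hasDerivAt_besselPhi {μ : ℝ} (hμ : 0 ≤ μ) (x : ℝ) :
    HasDerivAt (besselPhi μ) (-besselPhi (μ + 1) x) x := by
  have hR : x ∈ Metric.ball (0 : ℝ) (|x| + 1) := by simp
  set R := |x| + 1
  have key := hasDerivAt_tsum_of_isPreconnected
    (g := fun (m : ℕ) (y : ℝ) => besselCoeff μ m * y ^ m)
    (g' := fun (m : ℕ) (y : ℝ) => besselCoeff μ m * (m * y ^ (m - 1)))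
    (u := fun m : ℕ => |besselCoeff μ m| * (m * R ^ (m - 1)))
    (t := Metric.ball (0 : ℝ) R) (y₀ := x) (y := x) ?_ Metric.isOpen_ball
    (convex_ball _ _).isPreconnected ?_ ?_ hR (summable_besselPhi hμ x) hR
  · refine key.congr_deriv ?_
    have hs : ∀ m : ℕ, besselCoeff μ (m + 1) * (((m + 1 : ℕ) : ℝ) * x ^ (m + 1 - 1)) =
        -(besselCoeff (μ + 1) m * x ^ m) := fun m => by
      have := besselCoeff_succ_mul μ m
      push_cast
      rw [← mul_assoc, this]; ring
    have hsum : Summable fun m : ℕ => besselCoeff μ m * ((m : ℝ) * x ^ (m - 1)) := by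
      rw [← summable_nat_add_iff 1]
      simp_rw [hs]
      exact (summable_besselPhi (by positivity) x).neg
    rw [hsum.tsum_eq_zero_add]
    simp_rw [hs]
    rw [tsum_neg]; simp [besselPhi]
  · rw [← summable_nat_add_iff 1]
    have hs : ∀ m : ℕ, |besselCoeff μ (m + 1)| * (((m + 1 : ℕ) : ℝ) * R ^ (m + 1 - 1)) =
        |besselCoeff (μ + 1) m * R ^ m| := fun m => by
      have := congrArg abs (besselCoeff_succ_mul μ m)
      rw [abs_mul, abs_neg, abs_of_nonneg (by positivity : (0 : ℝ) ≤ m + 1)] at this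
      push_cast
      rw [← mul_assoc, this, abs_mul, abs_pow,
        abs_of_nonneg (by positivity : (0 : ℝ) ≤ R)]
    simp_rw [hs]
    exact (summable_besselPhi (by positivity) R).abs
  · intro m y _
    exact (hasDerivAt_pow m y).const_mul _
  · intro m y hy
    have hy' : |y| ≤ R := by
      have := mem_ball_zero_iff.1 hy
      exact this.le
    rw [Real.norm_eq_abs, abs_mul, abs_mul, abs_pow, Nat.abs_cast]
    gcongr

lemma besselPhi_recurrence {μ : ℝ} (hμ : 0 ≤ μ) (x : ℝ) :
    besselPhi μ x = (μ + 1) * besselPhi (μ + 1) x - x * besselPhi (μ + 2) x := by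
  have s1 := (summable_besselPhi (μ := μ + 1) (by positivity) x)
  have s2 := (summable_besselPhi (μ := μ + 2) (by positivity) x)
  have s0 := summable_besselPhi hμ x
  have hc : ∀ m : ℕ, besselCoeff μ m = (μ + 1 + m) * besselCoeff (μ + 1) m := fun m => by
    have hg : Real.Gamma (μ + 1 + m + 1) = (μ + 1 + m) * Real.Gamma (μ + m + 1) := by
      rw [Real.Gamma_add_one (by positivity)]; ring_nf
    have : (μ + 1 + m) ≠ 0 := by positivity
    have : Real.Gamma (μ + m + 1) ≠ 0 := (Real.Gamma_pos_of_pos (by positivity)).ne'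
    rw [besselCoeff, besselCoeff, hg]; field_simp
  have hd : besselPhi μ x - (μ + 1) * besselPhi (μ + 1) x =
      ∑' m : ℕ, (m : ℝ) * (besselCoeff (μ + 1) m * x ^ m) := by
    rw [besselPhi, besselPhi, ← tsum_mul_left, ← s0.tsum_sub (s1.mul_left _)]
    congr 1; ext m; rw [hc]; ring
  have hshift : ∀ m : ℕ, ((m + 1 : ℕ) : ℝ) * (besselCoeff (μ + 1) (m + 1) * x ^ (m + 1)) =
      -x * (besselCoeff (μ + 2) m * x ^ m) := fun m => by
    have := besselCoeff_succ_mul (μ + 1) m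
    rw [show μ + 1 + 1 = μ + 2 by ring] at this
    push_cast
    linear_combination x ^ (m + 1) * this
  have hsum : Summable fun m : ℕ => (m : ℝ) * (besselCoeff (μ + 1) m * x ^ m) := by
    rw [← summable_nat_add_iff 1]
    simp_rw [hshift]
    exact s2.mul_left _
  rw [hsum.tsum_eq_zero_add] at hd
  simp_rw [hshift] at hd
  rw [tsum_mul_left] at hd
  change _ = _ + -x * besselPhi (μ + 2) x at hd
  simp at hd
  linarith

lemma besselPhi_zero_pos {μ : ℝ} (hμ : 0 ≤ μ) : 0 < besselPhi μ 0 := by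
  rw [besselPhi, tsum_eq_single 0 (fun m hm => by simp [hm])]
  simp only [besselCoeff]
  have : 0 < Real.Gamma (μ + 1) := Real.Gamma_pos_of_pos (by positivity)
  simpa using this

lemma continuous_besselPhi {μ : ℝ} (hμ : 0 ≤ μ) : Continuous (besselPhi μ) :=
  continuous_iff_continuousAt.2 fun x => (hasDerivAt_besselPhi hμ x).continuousAt

lemma besselJ_eq (μ : ℝ) {z : ℝ} (hz : 0 < z) :
    besselJ μ z = (z / 2) ^ μ * besselPhi μ ((z / 2) ^ 2) := by
  rw [besselJ, besselPhi, ← tsum_mul_left]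
  congr 1; ext m
  rw [Real.rpow_add (by positivity), ← pow_mul, ← Real.rpow_natCast (z / 2) (2 * m)]
  push_cast [besselCoeff]
  ring

lemma hasDerivAt_besselJ {μ : ℝ} (hμ : 0 ≤ μ) {z : ℝ} (hz : 0 < z) :
    HasDerivAt (besselJ μ) (μ / z * besselJ μ z - besselJ (μ + 1) z) z := by
  have h1 : HasDerivAt (fun y : ℝ => y / 2) (1 / 2) z := (hasDerivAt_id z).div_const 2
  have h2 := h1.rpow_const (p := μ) (Or.inl (by positivity))
  have h3 := (hasDerivAt_besselPhi hμ ((z / 2) ^ 2)).comp z (h1.pow 2)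
  have h4 := (h2.mul h3).congr_of_eventuallyEq (f₁ := besselJ μ) (by
    filter_upwards [lt_mem_nhds hz] with y hy
    simpa using besselJ_eq μ hy)
  refine h4.congr_deriv ?_
  rw [besselJ_eq μ hz, besselJ_eq (μ + 1) hz, Real.rpow_sub_one (by positivity),
    Real.rpow_add_one (by positivity)]
  simp
  field_simp
  ring

lemma besselJ_recurrence {μ : ℝ} (hμ : 0 ≤ μ) {z : ℝ} (hz : 0 < z) :
    besselJ (μ + 2) z = 2 * (μ + 1) / z * besselJ (μ + 1) z - besselJ μ z := by
  rw [besselJ_eq _ hz, besselJ_eq _ hz, besselJ_eq _ hz, besselPhi_recurrence hμ,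
    Real.rpow_add_one (by positivity), Real.rpow_add (by positivity), Real.rpow_two]
  field_simp
  ring

lemma hasDerivAt_besselJ_succ {μ : ℝ} (hμ : 0 ≤ μ) {z : ℝ} (hz : 0 < z) :
    HasDerivAt (besselJ (μ + 1)) (besselJ μ z - (μ + 1) / z * besselJ (μ + 1) z) z := by
  refine (hasDerivAt_besselJ (μ := μ + 1) (by positivity) hz).congr_deriv ?_
  rw [show μ + 1 + 1 = μ + 2 by ring, besselJ_recurrence hμ hz]
  ring

lemma tendsto_besselPhi_sq {μ : ℝ} (hμ : 0 ≤ μ) :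
    Tendsto (fun z : ℝ => besselPhi μ ((z / 2) ^ 2)) (𝓝[>] 0) (𝓝 (besselPhi μ 0)) := by
  have h : Continuous fun z : ℝ => besselPhi μ ((z / 2) ^ 2) :=
    (continuous_besselPhi hμ).comp (by fun_prop)
  have := h.tendsto 0
  simp only [zero_div, ne_eq, OfNat.ofNat_ne_zero, not_false_eq_true, zero_pow] at this
  exact this.mono_left nhdsWithin_le_nhds

lemma tendsto_mul_besselJ {μ : ℝ} (hμ : 0 ≤ μ) :
    Tendsto (fun z : ℝ => z * besselJ μ z) (𝓝[>] 0) (𝓝 0) := by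
  have h : Tendsto (fun z : ℝ => z * (z / 2) ^ μ) (𝓝[>] 0) (𝓝 0) := by
    have hc : Continuous fun z : ℝ => z * (z / 2) ^ μ :=
      continuous_id.mul ((continuous_id.div_const 2).rpow_const fun _ => Or.inr hμ)
    have := hc.tendsto 0
    simp only [zero_mul] at this
    exact this.mono_left nhdsWithin_le_nhds
  have := h.mul (tendsto_besselPhi_sq hμ)
  rw [zero_mul] at this
  refine this.congr' ?_
  filter_upwards [self_mem_nhdsWithin] with z hz
  rw [besselJ_eq μ hz]; ring

lemma eventually_besselJ_pos {μ : ℝ} (hμ : 0 ≤ μ) : ∀ᶠ z in 𝓝[>] (0 : ℝ), 0 < besselJ μ z := by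
  filter_upwards [self_mem_nhdsWithin,
    (tendsto_besselPhi_sq hμ).eventually (lt_mem_nhds (besselPhi_zero_pos hμ))] with z hz h
  rw [besselJ_eq μ hz]
  have hz : 0 < z := hz
  positivity

lemma eventually_besselJ_succ_lt {μ : ℝ} (hμ : 0 ≤ μ) {c : ℝ} (hc : 0 < c) :
    ∀ᶠ z in 𝓝[>] (0 : ℝ), besselJ (μ + 1) z < c * besselJ μ z := by
  have h0 : Tendsto (fun z : ℝ => z / 2) (𝓝[>] 0) (𝓝 0) := by
    have : Continuous fun z : ℝ => z / 2 := by fun_prop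
    simpa using (this.tendsto 0).mono_left nhdsWithin_le_nhds
  have h1 := h0.mul (tendsto_besselPhi_sq (μ := μ + 1) (by positivity))
  have h2 := (tendsto_besselPhi_sq hμ).const_mul c
  rw [zero_mul] at h1
  filter_upwards [self_mem_nhdsWithin,
    h1.eventually_lt h2 (mul_pos hc (besselPhi_zero_pos hμ))] with z hz h
  have hz : 0 < z := hz
  rw [besselJ_eq _ hz, besselJ_eq _ hz, Real.rpow_add_one (by positivity)]
  have := mul_lt_mul_of_pos_left h (by positivity : 0 < (z / 2) ^ μ)
  linarith

lemma continuousAt_besselJ {μ : ℝ} (hμ : 0 ≤ μ) {z : ℝ} (hz : 0 < z) :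
    ContinuousAt (besselJ μ) z := (hasDerivAt_besselJ hμ hz).continuousAt

/-- A function on `(0, ∞)` with limit `0` at `0⁺` and nonnegative derivative that is positive
near `0` is positive. -/
lemma pos_of_tendsto_zero_of_deriv_nonneg {F F' : ℝ → ℝ}
    (hF : ∀ z, 0 < z → HasDerivAt F (F' z) z) (h0 : Tendsto F (𝓝[>] 0) (𝓝 0))
    (hnn : ∀ z, 0 < z → 0 ≤ F' z) (hpos : ∀ᶠ z in 𝓝[>] (0 : ℝ), 0 < F' z) {z : ℝ} (hz : 0 < z) :
    0 < F z := by
  have hmono : MonotoneOn F (Ioi 0) := by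
    refine monotoneOn_of_deriv_nonneg (convex_Ioi 0)
      (fun y hy => (hF y hy).continuousAt.continuousWithinAt) ?_ ?_
    · intro y hy
      rw [interior_Ioi] at hy
      exact (hF y hy).differentiableAt.differentiableWithinAt
    · intro y hy
      rw [interior_Ioi] at hy
      rw [(hF y hy).deriv]; exact hnn y hy
  have hge : ∀ y, 0 < y → 0 ≤ F y := fun y hy => by
    refine le_of_tendsto h0 ?_
    filter_upwards [Ioo_mem_nhdsGT hy] with x hx
    exact hmono hx.1 hy hx.2.le
  refine (hge z hz).lt_of_ne fun hz0 => ?_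
  obtain ⟨y, hy, hy'⟩ := (hpos.and (Ioo_mem_nhdsGT hz)).exists
  have hloc : F =ᶠ[𝓝 y] fun _ => 0 := by
    filter_upwards [Ioo_mem_nhds hy'.1 hy'.2] with x hx
    exact le_antisymm (hz0 ▸ hmono hx.1 hz hx.2.le) (hge x hx.1)
  have := (hF y hy'.1).unique ((hasDerivAt_const y (0 : ℝ)).congr_of_eventuallyEq hloc)
  exact hy.ne' this

lemma besselJ_quadratic_tendsto_zero {μ : ℝ} (hμ : 0 ≤ μ) (a : ℝ) :
    Tendsto (fun z => z ^ 2 * (besselJ μ z ^ 2 + besselJ (μ + 1) z ^ 2) -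
      a * z * besselJ μ z * besselJ (μ + 1) z) (𝓝[>] 0) (𝓝 0) := by
  have h1 := tendsto_mul_besselJ hμ
  have h2 := tendsto_mul_besselJ (μ := μ + 1) (by positivity)
  have h3 : Tendsto (fun z => besselJ (μ + 1) z) (𝓝[>] 0) (𝓝 0) := by
    have hc : Continuous fun z : ℝ => (z / 2) ^ (μ + 1) :=
      (continuous_id.div_const 2).rpow_const fun _ => Or.inr (by positivity)
    have h := ((hc.tendsto 0).mono_left nhdsWithin_le_nhds).mul
      (tendsto_besselPhi_sq (μ := μ + 1) (by positivity))
    rw [zero_div, Real.zero_rpow (by positivity), zero_mul] at h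
    refine h.congr' ?_
    filter_upwards [self_mem_nhdsWithin] with z hz
    rw [besselJ_eq _ hz]
  have := ((h1.pow 2).add (h2.pow 2)).sub ((h1.mul h3).const_mul a)
  simp only [ne_eq, OfNat.ofNat_ne_zero, not_false_eq_true, zero_pow, add_zero, mul_zero,
    sub_zero] at this
  refine this.congr fun z => ?_
  ring

lemma hasDerivAt_besselJ_quadratic {μ : ℝ} (hμ : 0 ≤ μ) (a : ℝ) {z : ℝ} (hz : 0 < z) :
    HasDerivAt (fun z => z ^ 2 * (besselJ μ z ^ 2 + besselJ (μ + 1) z ^ 2) -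
      a * z * besselJ μ z * besselJ (μ + 1) z)
      ((2 * μ + 2 - a) * z * besselJ μ z ^ 2 + (a - 2 * μ) * z * besselJ (μ + 1) z ^ 2) z := by
  have hJ := hasDerivAt_besselJ hμ hz
  have hK := hasDerivAt_besselJ_succ hμ hz
  refine ((((hasDerivAt_id z).pow 2).mul ((hJ.pow 2).add (hK.pow 2))).sub
    ((((hasDerivAt_id z).const_mul a).mul hJ).mul hK)).congr_deriv ?_
  simp
  field_simp
  ring

lemma besselJ_quadratic_pos {μ : ℝ} (hμ : 0 ≤ μ) {a : ℝ} (ha : 2 * μ ≤ a) (ha' : a < 2 * μ + 2)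
    {z : ℝ} (hz : 0 < z) :
    0 < z ^ 2 * (besselJ μ z ^ 2 + besselJ (μ + 1) z ^ 2) -
      a * z * besselJ μ z * besselJ (μ + 1) z := by
  refine pos_of_tendsto_zero_of_deriv_nonneg (fun y hy => hasDerivAt_besselJ_quadratic hμ a hy)
    (besselJ_quadratic_tendsto_zero hμ a) (fun y hy => ?_) ?_ hz
  · have := sub_nonneg.2 ha
    have := sub_nonneg.2 ha'.le
    positivity
  · filter_upwards [self_mem_nhdsWithin, eventually_besselJ_pos hμ] with y hy hJ
    have hy : 0 < y := hy
    have := sub_nonneg.2 ha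
    have := sub_pos.2 ha'
    positivity

lemma besselJ_succ_ne_zero_of_zero {μ : ℝ} (hμ : 0 ≤ μ) {z : ℝ} (hz : 0 < z)
    (h : besselJ μ z = 0) : besselJ (μ + 1) z ≠ 0 := fun h' => by
  have := besselJ_quadratic_pos hμ le_rfl (by linarith) hz
  simp [h, h'] at this

lemma strictMonoOn_besselJ_ratio {μ : ℝ} (hμ : 0 ≤ μ) {a b : ℝ} (ha : 0 ≤ a)
    (hJ : ∀ z ∈ Ioo a b, besselJ μ z ≠ 0) :
    StrictMonoOn (fun z => besselJ (μ + 1) z / besselJ μ z) (Ioo a b) := by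
  refine strictMonoOn_of_deriv_pos (convex_Ioo a b) (fun y hy => ?_) fun y hy => ?_
  · have hy0 := ha.trans_lt hy.1
    exact ((continuousAt_besselJ (by positivity) hy0).div (continuousAt_besselJ hμ hy0)
      (hJ y hy)).continuousWithinAt
  · rw [interior_Ioo] at hy
    have hy0 := ha.trans_lt hy.1
    have hne := hJ y hy
    have hd := (hasDerivAt_besselJ_succ hμ hy0).div (hasDerivAt_besselJ hμ hy0) hne
    rw [show (fun z => besselJ (μ + 1) z / besselJ μ z) = besselJ (μ + 1) / besselJ μ from rfl,
      hd.deriv]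
    refine div_pos ?_ (by positivity)
    have := besselJ_quadratic_pos hμ (a := 2 * μ + 1) (by linarith) (by linarith) hy0
    refine pos_of_mul_pos_right (a := y ^ 2) (lt_of_lt_of_eq this ?_) (by positivity)
    field_simp
    ring

lemma strictMonoOn_mul_besselJ_ratio {μ : ℝ} (hμ : 0 ≤ μ) {a b : ℝ} (ha : 0 ≤ a)
    (hJ : ∀ z ∈ Ioo a b, besselJ μ z ≠ 0) :
    StrictMonoOn (fun z => z * besselJ (μ + 1) z / besselJ μ z) (Ioo a b) := by
  refine strictMonoOn_of_deriv_pos (convex_Ioo a b) (fun y hy => ?_) fun y hy => ?_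
  · have hy0 := ha.trans_lt hy.1
    exact ((continuousAt_id.mul (continuousAt_besselJ (by positivity) hy0)).div
      (continuousAt_besselJ hμ hy0) (hJ y hy)).continuousWithinAt
  · rw [interior_Ioo] at hy
    have hy0 := ha.trans_lt hy.1
    have hne := hJ y hy
    have hd := ((hasDerivAt_id y).mul (hasDerivAt_besselJ_succ hμ hy0)).div
      (hasDerivAt_besselJ hμ hy0) hne
    rw [show (fun z => z * besselJ (μ + 1) z / besselJ μ z) =
      id * besselJ (μ + 1) / besselJ μ from rfl, hd.deriv]
    refine div_pos ?_ (by positivity)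
    have := besselJ_quadratic_pos hμ le_rfl (by linarith) hy0
    refine pos_of_mul_pos_right (a := y) (lt_of_lt_of_eq this ?_) hy0.le
    simp
    field_simp
    ring

lemma deriv_besselJ_eq_zero_iff {μ : ℝ} (hμ : 0 ≤ μ) {z : ℝ} (hz : 0 < z) :
    deriv (besselJ μ) z = 0 ↔ z * besselJ (μ + 1) z = μ * besselJ μ z := by
  rw [(hasDerivAt_besselJ hμ hz).deriv]
  constructor
  · intro h
    field_simp at h
    linarith
  · intro h
    field_simp
    linarith

/-- Critical points of `J_μ` lie beyond `μ`. -/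
lemma lt_of_deriv_besselJ_eq_zero {μ : ℝ} (hμ : 0 ≤ μ) {z : ℝ} (hz : 0 < z)
    (h : deriv (besselJ μ) z = 0) : μ < z := by
  rw [deriv_besselJ_eq_zero_iff hμ hz] at h
  have := besselJ_quadratic_pos hμ le_rfl (by linarith) hz
  have h2 : 0 < (z ^ 2 - μ ^ 2) * besselJ μ z ^ 2 := by
    refine lt_of_lt_of_eq this ?_
    linear_combination (z * besselJ (μ + 1) z - μ * besselJ μ z) * h
  have h3 : 0 < z ^ 2 - μ ^ 2 := pos_of_mul_pos_left h2 (by positivity)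
  nlinarith

/-- At the right end of a zero-free interval, `J_{μ+1}` has the sign that `J_μ` has inside. -/
lemma besselJ_mul_besselJ_succ_pos {μ : ℝ} (hμ : 0 ≤ μ) {c b : ℝ} (hc : 0 < c) (hcb : c < b)
    (hJ : ∀ z ∈ Ico c b, besselJ μ z ≠ 0) (hb : besselJ μ b = 0) :
    0 < besselJ μ c * besselJ (μ + 1) b := by
  have hb0 := hc.trans hcb
  have hne : besselJ μ c * besselJ (μ + 1) b ≠ 0 :=
    mul_ne_zero (hJ c ⟨le_rfl, hcb⟩) (besselJ_succ_ne_zero_of_zero hμ hb0 hb)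
  by_contra hcon
  have hlt := lt_of_le_of_ne (not_lt.1 hcon) hne
  have hd : HasDerivAt (fun z => besselJ μ c * besselJ μ z)
      (-(besselJ μ c * besselJ (μ + 1) b)) b :=
    ((hasDerivAt_besselJ hμ hb0).const_mul _).congr_deriv (by rw [hb]; ring)
  have hs := (hasDerivAt_iff_tendsto_slope_left_right.1 hd).1.eventually
    (lt_mem_nhds (neg_pos.2 hlt))
  obtain ⟨x, hx, hx'⟩ := (hs.and (Ioo_mem_nhdsLT hcb)).exists
  have hxneg : besselJ μ c * besselJ μ x < 0 := by
    rw [slope_def_field, hb, mul_zero] at hx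
    by_contra hge
    have := div_nonpos_of_nonneg_of_nonpos (sub_nonneg.2 (not_lt.1 hge)) (sub_neg.2 hx'.2).le
    linarith
  have hcont : ContinuousOn (fun z => besselJ μ c * besselJ μ z) (Icc c x) := fun y hy =>
    ((continuousAt_besselJ hμ (hc.trans_le hy.1)).const_mul _).continuousWithinAt
  have hcpos : 0 < besselJ μ c * besselJ μ c := mul_self_pos.2 (hJ c ⟨le_rfl, hcb⟩)
  obtain ⟨y, hy, hy0⟩ := intermediate_value_Icc' hx'.1.le hcont ⟨hxneg.le, hcpos.le⟩
  rcases mul_eq_zero.1 hy0 with h | h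
  · exact hJ c ⟨le_rfl, hcb⟩ h
  · exact hJ y ⟨hy.1, hy.2.trans_lt hx'.2⟩ h

/-- A zero of `α J_μ - J_{μ+1}` on an interval ending at a zero of `J_μ`. -/
lemma exists_zero_besselJ_comb {μ : ℝ} (hμ : 0 ≤ μ) {c b : ℝ} (hc : 0 < c) (hcb : c < b)
    (hJ : ∀ z ∈ Ico c b, besselJ μ z ≠ 0) (hb : besselJ μ b = 0) {α : ℝ → ℝ}
    (hα : ContinuousOn α (Icc c b))
    (hpos : 0 < besselJ μ c * (α c * besselJ μ c - besselJ (μ + 1) c)) :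
    ∃ t ∈ Ioo c b, α t * besselJ μ t - besselJ (μ + 1) t = 0 := by
  have hcont : ContinuousOn (fun z => besselJ μ c * (α z * besselJ μ z - besselJ (μ + 1) z))
      (Icc c b) := by
    have h1 : ContinuousOn (besselJ μ) (Icc c b) := fun y hy =>
      (continuousAt_besselJ hμ (hc.trans_le hy.1)).continuousWithinAt
    have h2 : ContinuousOn (besselJ (μ + 1)) (Icc c b) := fun y hy =>
      (continuousAt_besselJ (by positivity) (hc.trans_le hy.1)).continuousWithinAt
    exact continuousOn_const.mul ((hα.mul h1).sub h2)
  have hneg : besselJ μ c * (α b * besselJ μ b - besselJ (μ + 1) b) < 0 := by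
    rw [hb, mul_zero, zero_sub, mul_neg]
    exact neg_neg_of_pos (besselJ_mul_besselJ_succ_pos hμ hc hcb hJ hb)
  obtain ⟨t, ht, ht0⟩ := intermediate_value_Ioo' hcb.le hcont ⟨hneg, hpos⟩
  exact ⟨t, ht, (mul_eq_zero.1 ht0).resolve_left (hJ c ⟨le_rfl, hcb⟩)⟩

/-- If `T` has one point below `j 1`, one in every gap of `j` and none on `j`, then its
enumeration interlaces with `j`. -/
lemma Enumerates.interlace {T : Set ℝ} {x j : ℕ → ℝ} (hx : Enumerates T x)
    (h0 : ∃ t ∈ T, t < j 1) (u0 : ∀ s ∈ T, ∀ t ∈ T, s < j 1 → t < j 1 → s = t)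
    (hgap : ∀ k, 1 ≤ k → ∃ t ∈ T, t ∈ Ioo (j k) (j (k + 1)))
    (ugap : ∀ k, 1 ≤ k → ∀ s ∈ T, ∀ t ∈ T, s ∈ Ioo (j k) (j (k + 1)) →
      t ∈ Ioo (j k) (j (k + 1)) → s = t)
    (hne : ∀ k, 1 ≤ k → j k ∉ T) {k : ℕ} (hk : 1 ≤ k) :
    x (k + 1) ∈ Ioo (j k) (j (k + 1)) := by
  obtain ⟨hmono, hmem, hsurj⟩ := hx
  have step : ∀ k, 1 ≤ k → x k < j k → (x (k + 1) < j k → x k = x (k + 1)) →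
      x (k + 1) ∈ Ioo (j k) (j (k + 1)) := by
    intro k hk hlt huniq
    have hs : x k < x (k + 1) := hmono (mem_Ici.2 hk) (mem_Ici.2 (by omega)) (by omega)
    constructor
    · refine lt_of_le_of_ne (not_lt.1 fun h => hs.ne (huniq h)) fun h => hne k hk ?_
      rw [h]; exact hmem _ (by omega)
    · obtain ⟨t, ht, ht'⟩ := hgap k hk
      obtain ⟨m, hm, rfl⟩ := hsurj t ht
      have hkm : k < m := (hmono.lt_iff_lt (mem_Ici.2 hk) (mem_Ici.2 hm)).1 (hlt.trans ht'.1)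
      exact ((hmono.le_iff_le (mem_Ici.2 (by omega)) (mem_Ici.2 hm)).2 hkm).trans_lt ht'.2
  induction k, hk using Nat.le_induction with
  | base =>
    obtain ⟨t, ht, htj⟩ := h0
    obtain ⟨m, hm, rfl⟩ := hsurj t ht
    have h1 : x 1 < j 1 :=
      ((hmono.le_iff_le (mem_Ici.2 le_rfl) (mem_Ici.2 hm)).2 hm).trans_lt htj
    exact step 1 le_rfl h1 fun h => u0 _ (hmem _ le_rfl) _ (hmem _ (by omega)) h1 h
  | succ k hk ih =>
    refine step (k + 1) (by omega) ih.2 fun h => ?_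
    have hs : x (k + 1) < x (k + 1 + 1) :=
      hmono (mem_Ici.2 (by omega)) (mem_Ici.2 (by omega)) (by omega)
    exact ugap k hk _ (hmem _ (by omega)) _ (hmem _ (by omega)) ih ⟨ih.1.trans hs, h⟩

lemma Enumerates.notMem_Ioo {S : Set ℝ} {j : ℕ → ℝ} (hj : Enumerates S j) {k : ℕ} (hk : 1 ≤ k)
    {z : ℝ} (hz : z ∈ Ioo (j k) (j (k + 1))) : z ∉ S := fun h => by
  obtain ⟨hmono, -, hsurj⟩ := hj
  obtain ⟨m, hm, rfl⟩ := hsurj z h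
  have h1 := (hmono.lt_iff_lt (mem_Ici.2 hk) (mem_Ici.2 hm)).1 hz.1
  have h2 := (hmono.lt_iff_lt (mem_Ici.2 hm) (mem_Ici.2 (by omega))).1 hz.2
  omega

lemma Enumerates.notMem_of_lt_one {S : Set ℝ} {j : ℕ → ℝ} (hj : Enumerates S j)
    {z : ℝ} (hz : z < j 1) : z ∉ S := fun h => by
  obtain ⟨hmono, -, hsurj⟩ := hj
  obtain ⟨m, hm, rfl⟩ := hsurj z h
  have h1 := (hmono.lt_iff_lt (mem_Ici.2 hm) (mem_Ici.2 le_rfl)).1 hz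
  omega

lemma besselJ_sub_zero_unique {μ : ℝ} (hμ : 0 ≤ μ) {a b : ℝ} (ha : 0 ≤ a)
    (hJ : ∀ z ∈ Ioo a b, besselJ μ z ≠ 0) {s t : ℝ} (hs : s ∈ Ioo a b) (ht : t ∈ Ioo a b)
    (hs0 : besselJ μ s - besselJ (μ + 1) s = 0) (ht0 : besselJ μ t - besselJ (μ + 1) t = 0) :
    s = t := by
  refine (strictMonoOn_besselJ_ratio hμ ha hJ).injOn hs ht ?_
  rw [← sub_eq_zero.1 hs0, ← sub_eq_zero.1 ht0, div_self (hJ s hs), div_self (hJ t ht)]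

lemma deriv_besselJ_zero_unique {μ : ℝ} (hμ : 0 ≤ μ) {a b : ℝ} (ha : 0 ≤ a)
    (hJ : ∀ z ∈ Ioo a b, besselJ μ z ≠ 0) {s t : ℝ} (hs : s ∈ Ioo a b) (ht : t ∈ Ioo a b)
    (hs0 : deriv (besselJ μ) s = 0) (ht0 : deriv (besselJ μ) t = 0) : s = t := by
  refine (strictMonoOn_mul_besselJ_ratio hμ ha hJ).injOn hs ht ?_
  rw [(deriv_besselJ_eq_zero_iff hμ (ha.trans_lt hs.1)).1 hs0,
    (deriv_besselJ_eq_zero_iff hμ (ha.trans_lt ht.1)).1 ht0,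
    mul_div_cancel_right₀ _ (hJ s hs), mul_div_cancel_right₀ _ (hJ t ht)]

/-- `J_0` has no critical point between `0` and its first positive zero. -/
lemma deriv_besselJ_zero_ne_zero {b t : ℝ} (hJ : ∀ z ∈ Ioo 0 b, besselJ 0 z ≠ 0)
    (ht : t ∈ Ioo 0 b) : deriv (besselJ 0) t ≠ 0 := fun h => by
  have hK : besselJ (0 + 1) t = 0 := by
    have := (deriv_besselJ_eq_zero_iff le_rfl ht.1).1 h
    rw [zero_mul] at this
    exact (mul_eq_zero.1 this).resolve_left ht.1.ne'
  obtain ⟨c, ⟨hc1, hc2⟩, hc⟩ := (((eventually_besselJ_pos le_rfl).and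
    (eventually_besselJ_pos (μ := 0 + 1) (by norm_num))).and (Ioo_mem_nhdsGT ht.1)).exists
  have := strictMonoOn_besselJ_ratio le_rfl le_rfl hJ ⟨hc.1, hc.2.trans ht.2⟩ ht hc.2
  simp only [hK, zero_div] at this
  exact absurd this (not_lt.2 (div_pos hc2 hc1).le)

lemma exists_besselJ_sub_zero_gap {μ : ℝ} (hμ : 0 ≤ μ) {a b : ℝ} (ha0 : 0 < a) (hab : a < b)
    (hJ : ∀ z ∈ Ioo a b, besselJ μ z ≠ 0) (ha : besselJ μ a = 0) (hb : besselJ μ b = 0) :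
    ∃ c ∈ Ioo a b, deriv (besselJ μ) c = 0 ∧
      ∃ t ∈ Ioo c b, besselJ μ t - besselJ (μ + 1) t = 0 := by
  obtain ⟨c, hc, hc0⟩ := exists_deriv_eq_zero hab
    (fun y hy => (continuousAt_besselJ hμ (ha0.trans_le hy.1)).continuousWithinAt)
    (ha.trans hb.symm)
  refine ⟨c, hc, hc0, ?_⟩
  have hcpos := ha0.trans hc.1
  have hlt := lt_of_deriv_besselJ_eq_zero hμ hcpos hc0
  have hK := (deriv_besselJ_eq_zero_iff hμ hcpos).1 hc0
  have hJ' : ∀ z ∈ Ico c b, besselJ μ z ≠ 0 := fun z hz => hJ z ⟨hc.1.trans_le hz.1, hz.2⟩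
  have := exists_zero_besselJ_comb hμ hcpos hc.2 hJ' hb (α := fun _ => 1) continuousOn_const ?_
  · simpa using this
  · have h1 := hJ c hc
    have h2 : 0 < c * (besselJ μ c * (1 * besselJ μ c - besselJ (μ + 1) c)) := by
      have : 0 < (c - μ) * besselJ μ c ^ 2 := mul_pos (sub_pos.2 hlt) (by positivity)
      refine lt_of_lt_of_eq this ?_
      linear_combination besselJ μ c * hK
    exact pos_of_mul_pos_right h2 hcpos.le

lemma exists_besselJ_sub_zero_first {μ : ℝ} (hμ : 0 ≤ μ) {b : ℝ} (hb0 : 0 < b)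
    (hJ : ∀ z ∈ Ioo 0 b, besselJ μ z ≠ 0) (hb : besselJ μ b = 0) :
    ∃ t ∈ Ioo 0 b, besselJ μ t - besselJ (μ + 1) t = 0 := by
  obtain ⟨c, ⟨hc1, hc2⟩, hc⟩ := (((eventually_besselJ_pos hμ).and
    (eventually_besselJ_succ_lt hμ one_pos)).and (Ioo_mem_nhdsGT hb0)).exists
  obtain ⟨t, ht, ht0⟩ := exists_zero_besselJ_comb hμ hc.1 hc.2
    (fun z hz => hJ z ⟨hc.1.trans_le hz.1, hz.2⟩) hb (α := fun _ => 1) continuousOn_const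
    (mul_pos hc1 (sub_pos.2 hc2))
  exact ⟨t, ⟨hc.1.trans ht.1, ht.2⟩, by simpa using ht0⟩

lemma exists_deriv_besselJ_zero_first {μ : ℝ} (hμ : 0 < μ) {b : ℝ} (hb0 : 0 < b)
    (hJ : ∀ z ∈ Ioo 0 b, besselJ μ z ≠ 0) (hb : besselJ μ b = 0) :
    ∃ t ∈ Ioo 0 b, deriv (besselJ μ) t = 0 := by
  obtain ⟨c, ⟨hc1, hc2⟩, hc⟩ := (((eventually_besselJ_pos hμ.le).and
    (eventually_besselJ_succ_lt hμ.le (div_pos hμ hb0))).and (Ioo_mem_nhdsGT hb0)).exists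
  obtain ⟨t, ht, ht0⟩ := exists_zero_besselJ_comb hμ.le hc.1 hc.2
    (fun z hz => hJ z ⟨hc.1.trans_le hz.1, hz.2⟩) hb (α := fun z => μ / z)
    (continuousOn_const.div continuousOn_id fun z hz => (hc.1.trans_le hz.1).ne')
    (mul_pos hc1 (sub_pos.2 (hc2.trans_le (by have := hc.1; have := hc.2; gcongr))))
  have ht1 := hc.1.trans ht.1
  exact ⟨t, ⟨ht1, ht.2⟩, by rw [(hasDerivAt_besselJ hμ.le ht1).deriv, ht0]⟩

/-- For `ν ≥ 1` and every `k ≥ 1`,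
`j_{ν−1,k} < j′_{ν−1,k+1} < λ⁻_{ν−1,k+1} < j_{ν−1,k+1}`. -/
theorem stmt5 (ν : ℝ) (hν : 1 ≤ ν) (j j' lam : ℕ → ℝ)
    (hj : Enumerates (posZeros (besselJ (ν - 1))) j)
    (hj' : Enumerates (besselDerivZeros (ν - 1)) j')
    (hlam : Enumerates (posZeros (fun z => besselJ (ν - 1) z - besselJ ν z)) lam)
    (k : ℕ) (hk : 1 ≤ k) :
    j k < j' (k + 1) ∧ j' (k + 1) < lam (k + 1) ∧ lam (k + 1) < j (k + 1) := by
  obtain ⟨μ, rfl⟩ : ∃ μ, ν = μ + 1 := ⟨ν - 1, by ring⟩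
  have hμ : 0 ≤ μ := by linarith
  rw [add_sub_cancel_right] at hj hj' hlam
  have hpos : ∀ k, 1 ≤ k → 0 < j k := fun k hk => (hj.2.1 k hk).1
  have hzero : ∀ k, 1 ≤ k → besselJ μ (j k) = 0 := fun k hk => (hj.2.1 k hk).2
  have hlt : ∀ k, 1 ≤ k → j k < j (k + 1) := fun k hk =>
    hj.1 (mem_Ici.2 hk) (mem_Ici.2 (by omega)) (by omega)
  have hfirst : ∀ z ∈ Ioo 0 (j 1), besselJ μ z ≠ 0 := fun z hz h =>
    hj.notMem_of_lt_one hz.2 ⟨hz.1, h⟩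
  have hgap : ∀ k, 1 ≤ k → ∀ z ∈ Ioo (j k) (j (k + 1)), besselJ μ z ≠ 0 := fun k hk z hz h =>
    hj.notMem_Ioo hk hz ⟨(hpos k hk).trans hz.1, h⟩
  have hlam_mem : ∀ {k}, 1 ≤ k → lam (k + 1) ∈ Ioo (j k) (j (k + 1)) := by
    refine hlam.interlace ?_ ?_ ?_ ?_ ?_
    · obtain ⟨t, ht, ht0⟩ :=
        exists_besselJ_sub_zero_first hμ (hpos 1 le_rfl) hfirst (hzero 1 le_rfl)
      exact ⟨t, ⟨ht.1, ht0⟩, ht.2⟩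
    · intro s hs t ht hs1 ht1
      exact besselJ_sub_zero_unique hμ le_rfl hfirst ⟨hs.1, hs1⟩ ⟨ht.1, ht1⟩ hs.2 ht.2
    · intro k hk
      obtain ⟨c, hc, -, t, ht, ht0⟩ := exists_besselJ_sub_zero_gap hμ (hpos k hk) (hlt k hk)
        (hgap k hk) (hzero k hk) (hzero (k + 1) (by omega))
      have hct := hc.1.trans ht.1
      exact ⟨t, ⟨(hpos k hk).trans hct, ht0⟩, hct, ht.2⟩
    · intro k hk s hs t ht hs1 ht1
      exact besselJ_sub_zero_unique hμ (hpos k hk).le (hgap k hk) hs1 ht1 hs.2 ht.2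
    · intro k hk h
      have h2 : besselJ μ (j k) - besselJ (μ + 1) (j k) = 0 := h.2
      rw [hzero k hk, zero_sub, neg_eq_zero] at h2
      exact besselJ_succ_ne_zero_of_zero hμ (hpos k hk) (hzero k hk) h2
  have hcrit : ∀ {z}, 0 < z → z ∈ besselDerivZeros μ → deriv (besselJ μ) z = 0 := by
    rintro z hz (h | h)
    · exact h.2
    · exact absurd h.2 hz.ne'
  have hj'_mem : ∀ {k}, 1 ≤ k → j' (k + 1) ∈ Ioo (j k) (j (k + 1)) := by
    refine hj'.interlace ?_ ?_ ?_ ?_ ?_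
    · rcases hμ.eq_or_lt with rfl | hμ'
      · exact ⟨0, Or.inr ⟨rfl, rfl⟩, hpos 1 le_rfl⟩
      · obtain ⟨t, ht, ht0⟩ :=
          exists_deriv_besselJ_zero_first hμ' (hpos 1 le_rfl) hfirst (hzero 1 le_rfl)
        exact ⟨t, Or.inl ⟨ht.1, ht0⟩, ht.2⟩
    · rintro s (hs | ⟨rfl, rfl⟩) t (ht | ⟨h0, rfl⟩) hs1 ht1
      · exact deriv_besselJ_zero_unique hμ le_rfl hfirst ⟨hs.1, hs1⟩ ⟨ht.1, ht1⟩ hs.2 ht.2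
      · subst h0
        exact absurd hs.2 (deriv_besselJ_zero_ne_zero hfirst ⟨hs.1, hs1⟩)
      · exact absurd ht.2 (deriv_besselJ_zero_ne_zero hfirst ⟨ht.1, ht1⟩)
      · rfl
    · intro k hk
      obtain ⟨c, hc, hc0, -⟩ := exists_besselJ_sub_zero_gap hμ (hpos k hk) (hlt k hk)
        (hgap k hk) (hzero k hk) (hzero (k + 1) (by omega))
      exact ⟨c, Or.inl ⟨(hpos k hk).trans hc.1, hc0⟩, hc⟩
    · intro k hk s hs t ht hs1 ht1
      exact deriv_besselJ_zero_unique hμ (hpos k hk).le (hgap k hk) hs1 ht1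
        (hcrit ((hpos k hk).trans hs1.1) hs) (hcrit ((hpos k hk).trans ht1.1) ht)
    · intro k hk h
      have h2 := (deriv_besselJ_eq_zero_iff hμ (hpos k hk)).1 (hcrit (hpos k hk) h)
      rw [hzero k hk, mul_zero] at h2
      exact besselJ_succ_ne_zero_of_zero hμ (hpos k hk) (hzero k hk)
        ((mul_eq_zero.1 h2).resolve_left (hpos k hk).ne')
  have hl := hlam_mem hk
  have hd := hj'_mem hk
  refine ⟨hd.1, ?_, hl.2⟩
  have hd0 := (hpos k hk).trans hd.1
  have hdz := hcrit hd0 (hj'.2.1 (k + 1) (by omega))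
  rw [← (strictMonoOn_besselJ_ratio hμ (hpos k hk).le (hgap k hk)).lt_iff_lt hd hl]
  have hlz : besselJ μ (lam (k + 1)) - besselJ (μ + 1) (lam (k + 1)) = 0 :=
    (hlam.2.1 (k + 1) (by omega)).2
  have hK := (deriv_besselJ_eq_zero_iff hμ hd0).1 hdz
  have hK' : besselJ (μ + 1) (j' (k + 1)) / besselJ μ (j' (k + 1)) = μ / j' (k + 1) := by
    have := hgap k hk _ hd
    field_simp
    linarith
  rw [hK', ← sub_eq_zero.1 hlz, div_self (hgap k hk _ hl), div_lt_one hd0]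
  exact lt_of_deriv_besselJ_eq_zero hμ hd0 hdz
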